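/- For real numbers μ₁, μ₂ and positive variance v, the squared L₂ distance between two Gaussian densities of equal variance satisfies ∫ (N(x; μ₁, v) − N(x; μ₂, v))² dx = 2(A − N(μ₁; μ₂, 2v)), where A = 1/√(4πv) and the integral is over ℝ. -/

import Mathlib

open MeasureTheory Real

/-- The Gaussian probability density on `ℝ` with mean `μ` and variance `v`:
`N(x; μ, v) = (2πv)^{-1/2} exp(-(x-μ)²/(2v))`. -/
noncomputable def gaussPdf (μ v x : ℝ) : ℝ :=
    (Real.sqrt (2 * Real.pi * v))⁻¹ * Real.exp (-(x - μ) ^ 2 / (2 * v))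

/-!
The product of two Gaussian densities in the same variable is, after completing the square, a
constant multiple of a third Gaussian density:
`N(x; μ₁, v₁) N(x; μ₂, v₂) = N(μ₁; μ₂, v₁ + v₂) N(x; m, v₁v₂ / (v₁ + v₂))`. Integrating in `x`
gives all the `L²` inner products that occur when the square of the difference is expanded.
-/

open ProbabilityTheory
open scoped NNReal

theorem integral_sub_sq_of_memLp {α : Type*} [MeasurableSpace α] {ν : Measure α} {f g : α → ℝ}
    (hf : MemLp f 2 ν) (hg : MemLp g 2 ν) :
    ∫ x, (f x - g x) ^ 2 ∂ν =
      ∫ x, f x ^ 2 ∂ν + ∫ x, g x ^ 2 ∂ν - 2 * ∫ x, f x * g x ∂ν := by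
  have integrable_sum : Integrable (fun x ↦ f x ^ 2 + g x ^ 2) ν :=
    hf.integrable_sq.add hg.integrable_sq
  have integrable_prod : Integrable (fun x ↦ f x * g x) ν := hf.integrable_mul hg
  calc ∫ x, (f x - g x) ^ 2 ∂ν
      = ∫ x, (f x ^ 2 + g x ^ 2 - 2 * (f x * g x)) ∂ν := by
        congr with x
        ring
    _ = ∫ x, f x ^ 2 ∂ν + ∫ x, g x ^ 2 ∂ν - 2 * ∫ x, f x * g x ∂ν := by
        rw [integral_sub integrable_sum (integrable_prod.const_mul 2),
          integral_add hf.integrable_sq hg.integrable_sq, integral_const_mul]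

theorem gaussPdf_eq_gaussianPDFReal (μ : ℝ) (v : ℝ≥0) : gaussPdf μ v = gaussianPDFReal μ v :=
  rfl

theorem gaussPdf_self (μ v : ℝ) : gaussPdf μ v μ = 1 / √(2 * π * v) := by
  simp [gaussPdf]

theorem measurable_gaussPdf (μ v : ℝ) : Measurable (gaussPdf μ v) := by
  unfold gaussPdf
  fun_prop

section Variance

variable {v v₁ v₂ : ℝ}

theorem integrable_gaussPdf (μ : ℝ) (hv : 0 ≤ v) : Integrable (gaussPdf μ v) := by
  lift v to ℝ≥0 using hv
  rw [gaussPdf_eq_gaussianPDFReal]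
  exact integrable_gaussianPDFReal μ v

theorem integral_gaussPdf (μ : ℝ) (hv : 0 < v) : ∫ x, gaussPdf μ v x = 1 := by
  lift v to ℝ≥0 using hv.le
  rw [gaussPdf_eq_gaussianPDFReal]
  exact integral_gaussianPDFReal_eq_one μ (by exact_mod_cast hv.ne')

theorem gaussPdf_mul_gaussPdf (μ₁ μ₂ x : ℝ) (hv₁ : 0 < v₁) (hv₂ : 0 < v₂) :
    gaussPdf μ₁ v₁ x * gaussPdf μ₂ v₂ x =
      gaussPdf μ₂ (v₁ + v₂) μ₁ *
        gaussPdf ((v₂ * μ₁ + v₁ * μ₂) / (v₁ + v₂)) (v₁ * v₂ / (v₁ + v₂)) x := by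
  have normalization : √(2 * π * v₁) * √(2 * π * v₂) =
      √(2 * π * (v₁ + v₂)) * √(2 * π * (v₁ * v₂ / (v₁ + v₂))) := by
    rw [← sqrt_mul (by positivity), ← sqrt_mul (by positivity)]
    congr 1
    field_simp
  have complete_square : -(x - μ₁) ^ 2 / (2 * v₁) + -(x - μ₂) ^ 2 / (2 * v₂) =
      -(μ₁ - μ₂) ^ 2 / (2 * (v₁ + v₂)) +
        -(x - (v₂ * μ₁ + v₁ * μ₂) / (v₁ + v₂)) ^ 2 / (2 * (v₁ * v₂ / (v₁ + v₂))) := by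
    field_simp
    ring
  simp only [gaussPdf]
  rw [mul_mul_mul_comm, ← mul_inv, ← exp_add, normalization, complete_square, mul_inv, exp_add,
    mul_mul_mul_comm]

theorem memLp_two_gaussPdf (μ : ℝ) (hv : 0 < v) : MemLp (gaussPdf μ v) 2 := by
  rw [memLp_two_iff_integrable_sq (measurable_gaussPdf μ v).aestronglyMeasurable]
  simp only [sq, gaussPdf_mul_gaussPdf μ μ _ hv hv]
  exact (integrable_gaussPdf _ (by positivity)).const_mul _

theorem integral_gaussPdf_mul_gaussPdf (μ₁ μ₂ : ℝ) (hv₁ : 0 < v₁) (hv₂ : 0 < v₂) :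
    ∫ x, gaussPdf μ₁ v₁ x * gaussPdf μ₂ v₂ x = gaussPdf μ₂ (v₁ + v₂) μ₁ := by
  simp only [gaussPdf_mul_gaussPdf μ₁ μ₂ _ hv₁ hv₂]
  rw [integral_const_mul, integral_gaussPdf _ (by positivity), mul_one]

theorem integral_gaussPdf_sq (μ : ℝ) (hv : 0 < v) :
    ∫ x, gaussPdf μ v x ^ 2 = 1 / √(4 * π * v) := by
  simp only [sq]
  rw [integral_gaussPdf_mul_gaussPdf μ μ hv hv, gaussPdf_self,
    show 2 * π * (v + v) = 4 * π * v by ring]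

theorem gauss_L2_sq_dist_general (μ₁ μ₂ : ℝ) (hv₁ : 0 < v₁) (hv₂ : 0 < v₂) :
    ∫ x, (gaussPdf μ₁ v₁ x - gaussPdf μ₂ v₂ x) ^ 2 =
      1 / √(4 * π * v₁) + 1 / √(4 * π * v₂) - 2 * gaussPdf μ₂ (v₁ + v₂) μ₁ := by
  rw [integral_sub_sq_of_memLp (memLp_two_gaussPdf μ₁ hv₁) (memLp_two_gaussPdf μ₂ hv₂),
    integral_gaussPdf_sq μ₁ hv₁, integral_gaussPdf_sq μ₂ hv₂,
    integral_gaussPdf_mul_gaussPdf μ₁ μ₂ hv₁ hv₂]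

end Variance

/-- The squared L₂ distance between two Gaussian densities with common variance `v`:
`∫ (N(x; μ₁, v) - N(x; μ₂, v))² dx = 2(A - N(μ₁; μ₂, 2v))` where `A = 1/√(4πv)`. -/
theorem gauss_L2_sq_dist (μ₁ μ₂ v : ℝ) (hv : 0 < v) :
    ∫ x : ℝ, (gaussPdf μ₁ v x - gaussPdf μ₂ v x) ^ 2 =
      2 * (1 / Real.sqrt (4 * Real.pi * v) - gaussPdf μ₂ (2 * v) μ₁) := by
  rw [gauss_L2_sq_dist_general μ₁ μ₂ hv hv, ← two_mul v]
  ring
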